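/- Suppose D_n(𝒞) ≠ 0 for every 1 ≤ n ≤ d, and define H(t) := H_n(𝒞) for r(n−1)/2 ≤ t < rn/2, 1 ≤ n ≤ d. Then there exist functions A(t,z), B(t,z) on [0,L)×ℂ, continuous in t and entire in z, and complex numbers a_n(L−rj), b_n(L−rj) (1 ≤ n ≤ d, 0 ≤ j ≤ d−n), such that: (i) for r(n−1)/2 ≤ t < rn/2, A(t,z) = (1/2)·Σ_{j=0}^{d−n}[a_n(L−rj)e^{i(L−rj−t)z} + conj(a_n(L−rj))e^{−i(L−rj−t)z}] and B(t,z) = (1/2)·Σ_{j=0}^{d−n}[b_n(L−rj)e^{i(L−rj−t)z} + conj(b_n(L−rj))e^{−i(L−rj−t)z}]; (ii) on each open interval (r(n−1)/2, rn/2), −(d/dt)ᵗ(A(t,z),B(t,z)) = z·[[0,−1],[1,0]]·H(t)·ᵗ(A(t,z),B(t,z)) for every z ∈ ℂ; (iii) A(0,z) = (E_𝒞(z)+E_𝒞^♯(z))/2 and B(0,z) = (i/2)(E_𝒞(z)−E_𝒞^♯(z)); (iv) for every z ∈ ℂ, lim_{t→L}(A(t,z),B(t,z)) = (A(0,0), B(0,0)),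 i.e. the limit equals the values of A and B at t=0, z=0 and is independent of z. -/

import Mathlib

open Complex Matrix Filter Topology
open scoped ComplexOrder

noncomputable section

def Lv (d : ℕ) : ℤ := if Even d then d / 2 else d

def rv (d : ℕ) : ℤ := if Even d then 1 else 2

/-- The coefficient of `T^k` in `f_𝒞(T) = Σ_{j=0}^d C_{-(L-rj)} T^{d-j}` is `C_{L-rk}`. -/
def coeffC (d : ℕ) (C : ℤ → ℂ) : ℕ → ℂ := fun k => C (Lv d - rv d * k)

def SCM (a : ℕ → ℂ) (d n : ℕ) : Matrix (Fin n) (Fin n) ℂ :=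
  Matrix.of fun j k => if (j : ℕ) ≤ (k : ℕ) then a (d - ((k : ℕ) - (j : ℕ))) else 0

def SCN (a : ℕ → ℂ) (n : ℕ) : Matrix (Fin n) (Fin n) ℂ :=
  Matrix.of fun j k => if (j : ℕ) ≤ (k : ℕ) then a ((k : ℕ) - (j : ℕ)) else 0

def SCL (a : ℕ → ℂ) (d n : ℕ) (ε : ℂ) : Matrix (Fin n ⊕ Fin n) (Fin n ⊕ Fin n) ℂ :=
  Matrix.fromBlocks (SCM a d n)ᵀ (ε • (SCN a n)ᴴ) (ε • SCN a n)
    ((SCM a d n).map (starRingEnd ℂ))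

def SCD (d : ℕ) (C : ℤ → ℂ) (n : ℕ) : ℂ :=
  if n = 0 then 1 else (SCL (coeffC d C) d n 1).det

def symVec (n : ℕ) (z : ℕ → ℂ) : Fin n ⊕ Fin n → ℂ :=
  Sum.elim (fun i => z (i : ℕ)) (fun i => (starRingEnd ℂ) (z ((i : Fin n).rev : ℕ)))

def rhsVec (d n : ℕ) (C : ℤ → ℂ) : Fin n ⊕ Fin n → ℂ :=
  Sum.elim (fun i => if (i : ℕ) + 1 = n then 2 * (starRingEnd ℂ) (C (Lv d)) else 0)
    (fun i => if (i : ℕ) = 0 then 2 * C (Lv d) else 0)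

def Rmat (zp zm : ℕ → ℕ → ℂ) (k : ℕ) : Matrix (Fin 2) (Fin 2) ℝ :=
  !![(zp k 0).re, (zp k 0).im; -(zm k 0).im, (zm k 0).re]

def Rprod (zp zm : ℕ → ℕ → ℂ) (n : ℕ) : Matrix (Fin 2) (Fin 2) ℝ :=
  ((List.range n).map (fun i => Rmat zp zm (n - i))).prod

def Hmat (zp zm : ℕ → ℕ → ℂ) (n : ℕ) : Matrix (Fin 2) (Fin 2) ℝ :=
  (!![(0:ℝ), -1; 1, 0])⁻¹ * (Rprod zp zm n)⁻¹ * !![(0:ℝ), 1; -1, 0] * Rprod zp zm n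

/-- The exponential polynomial `E_𝒞(z) = Σ_{j=0}^d C_{L-rj} e^{i(L-rj)z}`. -/
def Ecal (d : ℕ) (C : ℤ → ℂ) : ℂ → ℂ := fun z =>
  ∑ j ∈ Finset.range (d + 1),
    C (Lv d - rv d * j) * Complex.exp (Complex.I * ((Lv d - rv d * j : ℤ) : ℂ) * z)

/-- `E^♯(z) = conj(E(conj z))`. -/
def sharp (E : ℂ → ℂ) : ℂ → ℂ := fun z => (starRingEnd ℂ) (E ((starRingEnd ℂ) z))


open Polynomial in
def qF (a : ℕ → ℂ) (d : ℕ) : ℂ[X] := ∑ k ∈ Finset.range (d+1), Polynomial.monomial k (a (d - k))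
open Polynomial in
def qFb (a : ℕ → ℂ) (d : ℕ) : ℂ[X] :=
  ∑ k ∈ Finset.range (d+1), Polynomial.monomial k ((starRingEnd ℂ) (a k))

lemma qF_coeff (a : ℕ → ℂ) (d k : ℕ) (hk : k ≤ d) : (qF a d).coeff k = a (d - k) := by
  simp [qF, Polynomial.coeff_monomial]
  intro h; omega

lemma qFb_coeff (a : ℕ → ℂ) (d k : ℕ) (hk : k ≤ d) :
    (qFb a d).coeff k = (starRingEnd ℂ) (a k) := by
  simp [qFb, Polynomial.coeff_monomial]
  intro h; omega

open Polynomial in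
def QInv (a : ℕ → ℂ) (d n : ℕ) (π : ℂ) (s : ℕ → ℂ) : Prop :=
  ∃ U V W X : ℂ[X],
    (∀ k ≤ d, (U * qF a d + V * qFb a d).coeff k = if k < n then 0 else s (d - k)) ∧
    (∀ k ≤ d, (W * qF a d + X * qFb a d).coeff k =
      if k < n then 0 else (starRingEnd ℂ) (s (k - n))) ∧
    (∀ l ≤ n, X.coeff l = (starRingEnd ℂ) (U.coeff (n - l)) ∧
      W.coeff l = (starRingEnd ℂ) (V.coeff (n - l))) ∧
    (∀ k > n, U.coeff k = 0 ∧ V.coeff k = 0 ∧ W.coeff k = 0 ∧ X.coeff k = 0) ∧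
    U.coeff 0 = π ∧ W.coeff 0 = 0

lemma QInv_zero (a : ℕ → ℂ) (d : ℕ) : QInv a d 0 1 a := by
  refine ⟨1, 0, 0, 1, ?_, ?_, ?_, ?_, ?_, ?_⟩
  · intro k hk; simp [qF_coeff a d k hk]
  · intro k hk; simp [qFb_coeff a d k hk]
  · intro l hl; obtain rfl : l = 0 := by omega
    simp
  · intro k hk
    have : k ≠ 0 := by omega
    simp [Polynomial.coeff_one, this]
  · simp
  · simp

lemma QInv_succ (a : ℕ → ℂ) (d n : ℕ) (hn : n < d) (π : ℂ) (s : ℕ → ℂ) (h : QInv a d n π s)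
    (p q : ℂ)
    (h0 : p * s (d - n) + (starRingEnd ℂ) q * (starRingEnd ℂ) (s 0) = 0) :
    QInv a d (n+1) (p * π)
      (fun j => p * s j + (starRingEnd ℂ) q * (starRingEnd ℂ) (s (d - n - j))) := by
  obtain ⟨U, V, W, X, hG, hS, hr, hdeg, hU0, hW0⟩ := h
  have hGe : (Polynomial.C p * U + Polynomial.C ((starRingEnd ℂ) q) * W) * qF a d +
      (Polynomial.C p * V + Polynomial.C ((starRingEnd ℂ) q) * X) * qFb a d =
      Polynomial.C p * (U * qF a d + V * qFb a d) +
      Polynomial.C ((starRingEnd ℂ) q) * (W * qF a d + X * qFb a d) := by ring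
  have hSe : (Polynomial.X * (Polynomial.C q * U + Polynomial.C ((starRingEnd ℂ) p) * W)) * qF a d +
      (Polynomial.X * (Polynomial.C q * V + Polynomial.C ((starRingEnd ℂ) p) * X)) * qFb a d =
      Polynomial.X * (Polynomial.C q * (U * qF a d + V * qFb a d) +
      Polynomial.C ((starRingEnd ℂ) p) * (W * qF a d + X * qFb a d)) := by ring
  refine ⟨Polynomial.C p * U + Polynomial.C ((starRingEnd ℂ) q) * W,
    Polynomial.C p * V + Polynomial.C ((starRingEnd ℂ) q) * X,
    Polynomial.X * (Polynomial.C q * U + Polynomial.C ((starRingEnd ℂ) p) * W),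
    Polynomial.X * (Polynomial.C q * V + Polynomial.C ((starRingEnd ℂ) p) * X),
    ?_, ?_, ?_, ?_, ?_, ?_⟩
  · intro k hk
    rw [hGe, Polynomial.coeff_add, Polynomial.coeff_C_mul, Polynomial.coeff_C_mul, hG k hk, hS k hk]
    rcases lt_trichotomy k n with h | h | h
    · simp [h, Nat.lt_succ_of_lt h]
    · subst h; simpa using h0
    · have h1 : ¬ k < n := by omega
      have h2 : ¬ k < n + 1 := by omega
      have h3 : d - n - (d - k) = k - n := by omega
      simp [h1, h2, h3]
  · intro k hk
    rw [hSe]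
    rcases k with _ | k
    · simp
    · rw [Polynomial.coeff_X_mul, Polynomial.coeff_add, Polynomial.coeff_C_mul,
        Polynomial.coeff_C_mul, hG k (by omega), hS k (by omega)]
      by_cases h : k < n
      · simp [h]
      · have h3 : d - n - (k - n) = d - k := by omega
        simp [h, h3]; ring
  · intro l hl
    rcases l with _ | l
    · have := hdeg (n+1) (by omega)
      simp [this]
    · have h1 := hr l (by omega)
      have h2 := hr (n - l) (by omega)
      have h3 : n - (n - l) = l := by omega
      rw [h3] at h2
      have h4 : n + 1 - (l + 1) = n - l := by omega
      rw [Polynomial.coeff_X_mul, Polynomial.coeff_X_mul, h4]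
      simp only [Polynomial.coeff_add, Polynomial.coeff_C_mul, h1, h2, map_add, map_mul,
        Complex.conj_conj]
      constructor <;> ring
  · intro k hk
    obtain ⟨k, rfl⟩ : ∃ m, k = m + 1 := ⟨k - 1, by omega⟩
    have h1 := hdeg (k+1) (by omega)
    have h2 := hdeg k (by omega)
    rw [Polynomial.coeff_X_mul, Polynomial.coeff_X_mul]
    simp [h1, h2]
  · simp [hU0, hW0]
  · simp

lemma sum_le_aux (N i : ℕ) (hi : i < N) (f : ℕ → ℂ) :
    ∑ k : Fin N, (if (k : ℕ) ≤ i then f k else 0) = ∑ k ∈ Finset.range (i+1), f k := by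
  rw [Fin.sum_univ_eq_sum_range (fun k => if k ≤ i then f k else 0) N, ← Finset.sum_filter]
  apply Finset.sum_congr _ (fun _ _ => rfl)
  ext k; simp; omega

lemma sum_ge_aux (N i : ℕ) (hi : i < N) (f : ℕ → ℂ) :
    ∑ k : Fin N, (if i ≤ (k : ℕ) then f k else 0) =
      ∑ k ∈ Finset.range (N - 1 - i + 1), f (N - 1 - k) := by
  rw [Fin.sum_univ_eq_sum_range (fun k => if i ≤ k then f k else 0) N,
    ← Finset.sum_range_reflect, ← sum_le_aux N (N - 1 - i) (by omega),
    Fin.sum_univ_eq_sum_range (fun k => if k ≤ N - 1 - i then f (N - 1 - k) else 0) N]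
  apply Finset.sum_congr rfl
  intro k hk
  simp at hk
  congr 1
  simp; omega

lemma Q_kernel (a : ℕ → ℂ) (d n : ℕ) (hn : n < d) (π : ℂ) (s : ℕ → ℂ) (h : QInv a d n π s)
    (p q : ℂ) : ∃ x y : ℕ → ℂ,
    (SCL a d (n+1) 1).mulVec (Sum.elim (fun i => x i) (fun i => y i)) =
      Sum.elim (fun i : Fin (n+1) => if (i : ℕ) = n then
          p * s (d - n) + (starRingEnd ℂ) q * (starRingEnd ℂ) (s 0) else 0)
        (fun i : Fin (n+1) => if (i : ℕ) = 0 then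
          p * s 0 + (starRingEnd ℂ) q * (starRingEnd ℂ) (s (d - n)) else 0) ∧
    x 0 = p * π ∧ y n = (starRingEnd ℂ) (q * π) := by
  obtain ⟨U, V, W, X, hG, hS, hr, hdeg, hU0, hW0⟩ := h
  refine ⟨fun k => p * U.coeff k + (starRingEnd ℂ) q * W.coeff k,
    fun k => p * V.coeff k + (starRingEnd ℂ) q * X.coeff k, ?_, ?_, ?_⟩
  · have hGe : (Polynomial.C p * U + Polynomial.C ((starRingEnd ℂ) q) * W) * qF a d +
        (Polynomial.C p * V + Polynomial.C ((starRingEnd ℂ) q) * X) * qFb a d =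
        Polynomial.C p * (U * qF a d + V * qFb a d) +
        Polynomial.C ((starRingEnd ℂ) q) * (W * qF a d + X * qFb a d) := by ring
    have hSe : (Polynomial.C q * U + Polynomial.C ((starRingEnd ℂ) p) * W) * qF a d +
        (Polynomial.C q * V + Polynomial.C ((starRingEnd ℂ) p) * X) * qFb a d =
        (Polynomial.C q * (U * qF a d + V * qFb a d) +
        Polynomial.C ((starRingEnd ℂ) p) * (W * qF a d + X * qFb a d)) := by ring
    rw [SCL, Matrix.fromBlocks_mulVec]
    ext i
    rcases i with i | i
    · have hi := i.2
      have key := congrArg (fun P => Polynomial.coeff P (i : ℕ)) hGe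
      beta_reduce at key
      rw [Polynomial.coeff_add, Polynomial.coeff_add, Polynomial.coeff_C_mul,
        Polynomial.coeff_C_mul, hG i (by omega), hS i (by omega),
        Polynomial.coeff_mul, Polynomial.coeff_mul,
        Finset.Nat.sum_antidiagonal_eq_sum_range_succ_mk,
        Finset.Nat.sum_antidiagonal_eq_sum_range_succ_mk] at key
      simp only [Sum.elim_inl, Pi.add_apply, Matrix.mulVec, dotProduct, SCM, SCN,
        Matrix.transpose_apply, Matrix.of_apply, Function.comp, Sum.elim_inr, one_smul,
        Matrix.conjTranspose_apply, ite_mul, zero_mul, apply_ite (star : ℂ → ℂ), star_zero]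
      rw [sum_le_aux (n+1) i i.2 (fun k => a (d - (i - k)) *
          (p * U.coeff k + (starRingEnd ℂ) q * W.coeff k)),
        sum_le_aux (n+1) i i.2 (fun k => star (a (i - k)) *
          (p * V.coeff k + (starRingEnd ℂ) q * X.coeff k))]
      trans
      · refine Eq.trans ?_ key
        congr 1
        · apply Finset.sum_congr rfl
          intro k hk
          rw [Finset.mem_range] at hk
          simp only [Polynomial.coeff_add, Polynomial.coeff_C_mul]
          rw [qF_coeff a d _ (by omega), mul_comm]
        · apply Finset.sum_congr rfl
          intro k hk
          rw [Finset.mem_range] at hk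
          simp only [Polynomial.coeff_add, Polynomial.coeff_C_mul]
          rw [qFb_coeff a d _ (by omega), mul_comm]; rfl
      · by_cases h : (i : ℕ) < n
        · simp [h, h.ne]
        · obtain h : (i : ℕ) = n := by omega
          simp [h]
    · have hi := i.2
      obtain ⟨l, hl⟩ : ∃ l, l = n + 1 - 1 - (i : ℕ) := ⟨_, rfl⟩
      have hli : (i : ℕ) = n - l := by omega
      have key := congrArg (fun P => Polynomial.coeff P l) hSe
      beta_reduce at key
      rw [Polynomial.coeff_add, Polynomial.coeff_add, Polynomial.coeff_C_mul,
        Polynomial.coeff_C_mul, hG l (by omega), hS l (by omega),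
        Polynomial.coeff_mul, Polynomial.coeff_mul,
        Finset.Nat.sum_antidiagonal_eq_sum_range_succ_mk,
        Finset.Nat.sum_antidiagonal_eq_sum_range_succ_mk] at key
      replace key := congrArg (starRingEnd ℂ) key
      simp only [Sum.elim_inl, Pi.add_apply, Matrix.mulVec, dotProduct, SCM, SCN,
        Matrix.map_apply, Matrix.of_apply, Function.comp, Sum.elim_inr, one_smul,
        ite_mul, zero_mul, apply_ite (starRingEnd ℂ), map_zero]
      rw [sum_ge_aux (n+1) i i.2 (fun k => a (k - i) *
          (p * U.coeff k + (starRingEnd ℂ) q * W.coeff k)),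
        sum_ge_aux (n+1) i i.2 (fun k => (starRingEnd ℂ) (a (d - (k - i))) *
          (p * V.coeff k + (starRingEnd ℂ) q * X.coeff k)), ← hl]
      trans
      · refine Eq.trans ?_ key
        rw [map_add, add_comm]
        congr 1
        · rw [map_sum]
          apply Finset.sum_congr rfl
          intro k hk
          rw [Finset.mem_range] at hk
          have h1 := hr (n - k) (by omega)
          have h2 := hr k (by omega)
          have h3 : n - (n - k) = k := by omega
          have h4 : n + 1 - 1 - k - (n - l) = l - k := by omega
          rw [h3] at h1
          simp only [Polynomial.coeff_add, Polynomial.coeff_C_mul, map_mul, map_add]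
          rw [qF_coeff a d _ (by omega), hli, h4, add_tsub_cancel_right, h1.1, h2.2]
          simp; ring
        · rw [map_sum]
          apply Finset.sum_congr rfl
          intro k hk
          rw [Finset.mem_range] at hk
          have h1 := hr (n - k) (by omega)
          have h2 := hr k (by omega)
          have h3 : n - (n - k) = k := by omega
          have h4 : n + 1 - 1 - k - (n - l) = l - k := by omega
          rw [h3] at h1
          simp only [Polynomial.coeff_add, Polynomial.coeff_C_mul, map_mul, map_add]
          rw [qFb_coeff a d _ (by omega), hli, h4, add_tsub_cancel_right, h1.2, h2.1]
          simp; ring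
      · by_cases h : l < n
        · have : (i : ℕ) ≠ 0 := by omega
          simp [h, this]
        · obtain h : l = n := by omega
          have : (i : ℕ) = 0 := by omega
          simp [h, this]; ring
  · simp [hU0, hW0]
  · have h1 := hr n le_rfl
    simp only [Nat.sub_self, hU0] at h1
    have h2 := (hr 0 (Nat.zero_le _)).2
    rw [hW0, Nat.sub_zero] at h2
    have h3 : V.coeff n = 0 := by simpa using congrArg (starRingEnd ℂ) h2.symm
    simp [h1.1, h3]

lemma Q_given (a : ℕ → ℂ) (d n : ℕ) (c0 : ℂ) (zp zm : ℕ → ℂ)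
    (rhs : Fin (n+1) ⊕ Fin (n+1) → ℂ)
    (hr : ∀ i : Fin (n+1), rhs (Sum.inr i) = if (i : ℕ) = 0 then 2 * c0 else 0)
    (hp : (SCL a d (n+1) 1).mulVec (symVec (n+1) zp) = - rhs)
    (hm : (SCL a d (n+1) (-1)).mulVec (symVec (n+1) zm) = rhs) :
    (SCL a d (n+1) 1).mulVec (Sum.elim (fun i => (zp i + zm i) / 2)
      (fun i => (starRingEnd ℂ) ((zp (i.rev : ℕ) - zm (i.rev : ℕ)) / 2))) =
      Sum.elim (fun _ => 0) (fun i : Fin (n+1) => if (i : ℕ) = 0 then -2 * c0 else 0) := by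
  rw [SCL, Matrix.fromBlocks_mulVec] at hp hm ⊢
  have e1 : (fun i : Fin (n+1) => (zp i + zm i) / 2) =
      (1/2 : ℂ) • ((symVec (n+1) zp) ∘ Sum.inl + (symVec (n+1) zm) ∘ Sum.inl) := by
    ext i; simp [symVec]; ring
  have e2 : (fun i : Fin (n+1) => (starRingEnd ℂ) ((zp (i.rev : ℕ) - zm (i.rev : ℕ)) / 2)) =
      (1/2 : ℂ) • ((symVec (n+1) zp) ∘ Sum.inr - (symVec (n+1) zm) ∘ Sum.inr) := by
    ext i; simp [symVec, Complex.conj_ofNat]; ring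
  rw [Sum.elim_comp_inl, Sum.elim_comp_inr, e1, e2]
  simp only [one_smul, neg_smul, Matrix.neg_mulVec, Matrix.mulVec_smul, Matrix.mulVec_add,
    Matrix.mulVec_sub] at hp hm ⊢
  ext i
  have hp' := congrFun hp i
  have hm' := congrFun hm i
  rcases i with i | i
  · simp at hp' hm' ⊢
    linear_combination (1/2 : ℂ) * hp' + (1/2 : ℂ) * hm'
  · simp only [Pi.neg_apply, hr] at hp' hm'
    simp at hp' hm' ⊢
    split_ifs at hp' hm' ⊢ <;>
    linear_combination (1/2 : ℂ) * hp' - (1/2 : ℂ) * hm'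

lemma Q_step (a : ℕ → ℂ) (d n : ℕ) (hn : n < d) (π ρ c0 : ℂ) (s : ℕ → ℂ) (h : QInv a d n π s)
    (hdet : (SCL a d (n+1) 1).det ≠ 0) (hπ : (starRingEnd ℂ) π = π) (hπ0 : π ≠ 0)
    (hρ : (starRingEnd ℂ) ρ = ρ) (hρ0 : ρ ≠ 0) (hc : c0 ≠ 0) (hs : s 0 = ρ * c0)
    (v : Fin (n+1) ⊕ Fin (n+1) → ℂ) (p q : ℂ)
    (hv : (SCL a d (n+1) 1).mulVec v =
      Sum.elim (fun _ => 0) (fun i : Fin (n+1) => if (i : ℕ) = 0 then -2 * c0 else 0))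
    (hvp : v (Sum.inl 0) = p) (hvq : v (Sum.inr (Fin.last n)) = (starRingEnd ℂ) q) :
    p * s (d - n) + (starRingEnd ℂ) q * (starRingEnd ℂ) (s 0) = 0 ∧
    p * s 0 + (starRingEnd ℂ) q * (starRingEnd ℂ) (s (d - n)) = -2 * π * c0 ∧
    (starRingEnd ℂ) p = p ∧ p ≠ 0 ∧ p * (starRingEnd ℂ) p - q * (starRingEnd ℂ) q ≠ 0 := by
  have hs0 : s 0 ≠ 0 := by rw [hs]; exact mul_ne_zero hρ0 hc
  have hs0' : (starRingEnd ℂ) (s 0) ≠ 0 := by simpa using hs0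
  obtain ⟨D, hDdef⟩ : ∃ D, D = s 0 * (starRingEnd ℂ) (s 0) -
    s (d - n) * (starRingEnd ℂ) (s (d - n)) := ⟨_, rfl⟩
  have hDr : (starRingEnd ℂ) D = D := by rw [hDdef]; simp; ring
  have hD : D ≠ 0 := by
    intro hD
    obtain ⟨x, y, hxy, hx, hy⟩ := Q_kernel a d n hn π s h ((starRingEnd ℂ) (s 0))
      (-(starRingEnd ℂ) (s (d - n)))
    have h0 : (SCL a d (n+1) 1).mulVec (Sum.elim (fun i : Fin (n+1) => x i) (fun i : Fin (n+1) => y i)) = 0 := by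
      rw [hxy]
      ext i
      rcases i with i | i
      · simp; intro _; ring
      · simp; intro _; rw [← hD, hDdef]; ring
    have h1 := Matrix.eq_zero_of_mulVec_eq_zero hdet h0
    have h2 := congrFun h1 (Sum.inl 0)
    simp at h2
    rw [hx] at h2
    exact mul_ne_zero hs0' hπ0 h2
  obtain ⟨p', hp'⟩ : ∃ p', p' = -2 * c0 * π * (starRingEnd ℂ) (s 0) / D := ⟨_, rfl⟩
  obtain ⟨q', hq'⟩ : ∃ q', q' = (starRingEnd ℂ) (2 * c0 * π * s (d - n) / D) := ⟨_, rfl⟩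
  have hq'' : (starRingEnd ℂ) q' = 2 * c0 * π * s (d - n) / D := by rw [hq', Complex.conj_conj]
  have r1 : p' * s (d - n) + (starRingEnd ℂ) q' * (starRingEnd ℂ) (s 0) = 0 := by
    rw [hq'', hp']; field_simp; ring
  have r2 : p' * s 0 + (starRingEnd ℂ) q' * (starRingEnd ℂ) (s (d - n)) = -2 * π * c0 := by
    rw [hq'', hp']; field_simp; rw [hDdef]; ring
  obtain ⟨x, y, hxy, hx, hy⟩ := Q_kernel a d n hn π s h p' q'
  rw [r1, r2] at hxy
  have h0 : (SCL a d (n+1) 1).mulVec (Sum.elim (fun i : Fin (n+1) => x i) (fun i : Fin (n+1) => y i) - π • v) = 0 := by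
    rw [Matrix.mulVec_sub, Matrix.mulVec_smul, hv, hxy]
    ext i
    rcases i with i | i
    · simp
    · simp; split_ifs <;> ring
  have h1 := Matrix.eq_zero_of_mulVec_eq_zero hdet h0
  have h2 := congrFun h1 (Sum.inl 0)
  have h3 := congrFun h1 (Sum.inr (Fin.last n))
  simp [hvp, hvq, hx, hy, hπ] at h2 h3
  have e1 : p' = p := by
    apply mul_right_cancel₀ hπ0; linear_combination h2
  have e2 : q' = q := by
    have : (starRingEnd ℂ) q' = (starRingEnd ℂ) q := by
      apply mul_right_cancel₀ hπ0; linear_combination h3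
    exact (starRingEnd ℂ).injective this
  rw [e1, e2] at r1 r2
  rw [e1] at hp'
  have hpr : (starRingEnd ℂ) p = p := by
    rw [hp', hs]; simp [hπ, hρ, hDr, Complex.conj_ofNat]; ring
  have hp0 : p ≠ 0 := by
    rw [hp']; simp [hc, hπ0, hD, hs0]
  refine ⟨r1, r2, hpr, hp0, ?_⟩
  intro h
  have : (starRingEnd ℂ) p * (-2 * π * c0) = 0 := by
    have r1' := congrArg (starRingEnd ℂ) r1
    simp at r1'
    linear_combination -((starRingEnd ℂ) p) * r2 + s 0 * h + (starRingEnd ℂ) q * r1'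
  rw [hpr] at this
  simp [hp0, hπ0, hc] at this

def pS (zp zm : ℕ → ℕ → ℂ) (n : ℕ) : ℂ := (zp (n+1) 0 + zm (n+1) 0) / 2
def qS (zp zm : ℕ → ℕ → ℂ) (n : ℕ) : ℂ := (zp (n+1) 0 - zm (n+1) 0) / 2

def sS (a : ℕ → ℂ) (d : ℕ) (p q : ℕ → ℂ) : ℕ → ℕ → ℂ
  | 0 => a
  | n+1 => fun j => p n * sS a d p q n j +
      (starRingEnd ℂ) (q n) * (starRingEnd ℂ) (sS a d p q n (d - n - j))

lemma Q_main (d : ℕ) (C : ℤ → ℂ) (hC : C (Lv d) * C (-(Lv d)) ≠ 0)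
    (hD : ∀ n, 1 ≤ n → n ≤ d → SCD d C n ≠ 0)
    (zp zm : ℕ → ℕ → ℂ)
    (hzp : ∀ n, 1 ≤ n → n ≤ d →
      (SCL (coeffC d C) d n 1).mulVec (symVec n (zp n)) = -(rhsVec d n C))
    (hzm : ∀ n, 1 ≤ n → n ≤ d →
      (SCL (coeffC d C) d n (-1)).mulVec (symVec n (zm n)) = rhsVec d n C) (n : ℕ) (hn : n < d) :
    sS (coeffC d C) d (pS zp zm) (qS zp zm) (n+1) (d - n) = 0 ∧
    pS zp zm n * (starRingEnd ℂ) (pS zp zm n) - qS zp zm n * (starRingEnd ℂ) (qS zp zm n) ≠ 0 := by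
  have hc : C (Lv d) ≠ 0 := left_ne_zero_of_mul hC
  have step : ∀ n, n < d → ∀ π ρ, QInv (coeffC d C) d n π
      (sS (coeffC d C) d (pS zp zm) (qS zp zm) n) → (starRingEnd ℂ) π = π → π ≠ 0 →
      (starRingEnd ℂ) ρ = ρ → ρ ≠ 0 →
      sS (coeffC d C) d (pS zp zm) (qS zp zm) n 0 = ρ * C (Lv d) → _ :=
    fun n hn π ρ h h1 h2 h3 h4 h5 =>
    Q_step (coeffC d C) d n hn π ρ (C (Lv d))
      (sS (coeffC d C) d (pS zp zm) (qS zp zm) n) h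
      (by simpa [SCD] using hD (n+1) (by omega) (by omega)) h1 h2 h3 h4 hc h5 _
      (pS zp zm n) (qS zp zm n)
      (Q_given (coeffC d C) d n (C (Lv d)) (zp (n+1)) (zm (n+1)) (rhsVec d (n+1) C)
        (fun i => by simp [rhsVec]) (hzp (n+1) (by omega) (by omega))
        (hzm (n+1) (by omega) (by omega))) (by simp [pS]) (by simp [qS])
  have inv : ∀ n ≤ d, ∃ π ρ, QInv (coeffC d C) d n π
      (sS (coeffC d C) d (pS zp zm) (qS zp zm) n) ∧ (starRingEnd ℂ) π = π ∧ π ≠ 0 ∧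
      (starRingEnd ℂ) ρ = ρ ∧ ρ ≠ 0 ∧
      sS (coeffC d C) d (pS zp zm) (qS zp zm) n 0 = ρ * C (Lv d) := by
    intro n
    induction n with
    | zero => 
      intro _
      exact ⟨1, 1, QInv_zero _ _, by simp, by simp, by simp, by simp, by simp [sS, coeffC]⟩
    | succ n ih =>
      intro hn
      obtain ⟨π, ρ, h1, h2, h3, h4, h5, h6⟩ := ih (by omega)
      obtain ⟨g1, g2, g3, g4, g5⟩ := step n hn π ρ h1 h2 h3 h4 h5 h6
      refine ⟨pS zp zm n * π, -2 * π, QInv_succ _ d n hn π _ h1 _ _ g1, by simp [g3, h2],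
        mul_ne_zero g4 h3, by simp [h2, Complex.conj_ofNat], by simp [h3], ?_⟩
      simpa [sS] using g2
  obtain ⟨π, ρ, h1, h2, h3, h4, h5, h6⟩ := inv n hn.le
  obtain ⟨g1, g2, g3, g4, g5⟩ := step n hn π ρ h1 h2 h3 h4 h5 h6
  exact ⟨by simpa [sS] using g1, g5⟩

lemma glueQ (g : ℕ → ℝ → ℂ) (h : ℝ) (hh : 0 < h) (hg : ∀ n, Continuous (g n)) (N : ℕ)
    (hm : ∀ n < N, g n (h * (n+1)) = g (n+1) (h * (n+1))) :
    ∃ F : ℝ → ℂ, Continuous F ∧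
      (∀ n ≤ N, ∀ t, h * n ≤ t → t ≤ h * (n+1) → F t = g n t) ∧ ∀ t, h * N ≤ t → F t = g N t := by
  induction N with
  | zero =>
    refine ⟨g 0, hg 0, ?_, fun _ _ => rfl⟩
    intro n hn t _ _
    obtain rfl : n = 0 := by omega
    rfl
  | succ N ih =>
    obtain ⟨F, hF, h1, h2⟩ := ih (fun n hn => hm n (by omega))
    have hFe : F (h * (N+1)) = g (N+1) (h * (N+1)) := by
      rw [← hm N (by omega)]; apply h2; nlinarith
    refine ⟨fun t => if t ≤ h * (N+1) then F t else g (N+1) t, ?_, ?_, ?_⟩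
    · apply Continuous.if_le hF (hg _) continuous_id continuous_const
      rintro t rfl
      exact hFe
    · intro n hn t ht1 ht2
      rcases Nat.lt_or_ge n (N+1) with hlt | hge
      · have h3 : (n : ℝ) ≤ N := by exact_mod_cast Nat.lt_succ_iff.mp hlt
        have : t ≤ h * (N+1) := ht2.trans (by gcongr)
        simp only [this, if_true]
        exact h1 n (by omega) t ht1 ht2
      · obtain rfl : n = N + 1 := by omega
        push_cast at ht1
        by_cases h' : t ≤ h * (N+1)
        · simp only [h', if_true]
          obtain rfl := le_antisymm h' ht1
          exact hFe
        · simp only [h', if_false]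
    · intro t ht
      push_cast at ht
      by_cases h' : t ≤ h * (N+1)
      · simp only [h', if_true]
        obtain rfl := le_antisymm h' ht
        exact hFe
      · simp only [h', if_false]

def gQ (d : ℕ) (s : ℕ → ℕ → ℂ) (γ : ℕ → ℂ) (n : ℕ) (t : ℝ) (z : ℂ) : ℂ :=
  (1 / 2) * ∑ j ∈ Finset.range (d - n + 1),
          (γ n * s n j * Complex.exp (Complex.I * (((Lv d - rv d * j : ℤ) : ℂ) - (t : ℂ)) * z)
            + (starRingEnd ℂ) (γ n * s n j) *
              Complex.exp (-(Complex.I * (((Lv d - rv d * j : ℤ) : ℂ) - (t : ℂ)) * z)))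

lemma Lv_two (d : ℕ) : 2 * Lv d = rv d * d := by
  unfold Lv rv
  split_ifs with h
  · obtain ⟨k, rfl⟩ := h; push_cast; omega
  · ring

lemma rv_pos (d : ℕ) : 0 < rv d := by
  unfold rv
  split_ifs <;> norm_num

lemma gQ_match (d : ℕ) (p q : ℕ → ℂ) (s : ℕ → ℕ → ℂ) (γ : ℕ → ℂ) (n : ℕ) (hn : n < d)
    (hγ : γ n = p n * γ (n+1) + q n * (starRingEnd ℂ) (γ (n+1)))
    (hs : ∀ j, s (n+1) j = p n * s n j +
      (starRingEnd ℂ) (q n) * (starRingEnd ℂ) (s n (d - n - j)))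
    (h0 : s (n+1) (d - n) = 0) (t : ℝ) (z : ℂ)
    (ht : z = 0 ∨ t = (rv d : ℝ) / 2 * n) : gQ d s γ n t z = gQ d s γ (n+1) t z := by
  unfold gQ
  congr 1
  have e1 : d - (n+1) + 1 = d - n := by omega
  obtain ⟨m, hm⟩ : ∃ m, m = d - n := ⟨_, rfl⟩
  rw [e1, ← hm]
  rw [← hm] at h0 hs
  have e2 : ∀ G : ℕ → ℂ, G m = 0 → ∑ j ∈ Finset.range m, G j = ∑ j ∈ Finset.range (m+1), G j := by
    intro G hG; rw [Finset.sum_range_succ, hG, add_zero]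
  rw [e2 _ (by simp [h0])]
  obtain ⟨Y, hY⟩ : ∃ Y : ℕ → ℂ, Y = fun j : ℕ =>
    Complex.exp (Complex.I * (((Lv d - rv d * j : ℤ) : ℂ) - (t : ℂ)) * z) := ⟨_, rfl⟩
  have hYm : ∀ j ≤ m,
      Complex.exp (-(Complex.I * (((Lv d - rv d * j : ℤ) : ℂ) - (t : ℂ)) * z)) = Y (m - j) := by
    intro j hj
    rw [hY]
    dsimp only
    congr 1
    rcases ht with rfl | rfl
    · simp
    · have := congrArg (fun x : ℤ => (x : ℂ)) (Lv_two d)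
      push_cast [Nat.cast_sub hj] at this ⊢
      have hm' : (m : ℂ) = d - n := by rw [hm, Nat.cast_sub hn.le]
      rw [hm']
      linear_combination -Complex.I * z * this
  have l1 : ∀ c : ℕ → ℂ, ∑ j ∈ Finset.range (m+1),
      (c j * Complex.exp (Complex.I * (((Lv d - rv d * j : ℤ) : ℂ) - (t : ℂ)) * z)
            + (starRingEnd ℂ) (c j) *
              Complex.exp (-(Complex.I * (((Lv d - rv d * j : ℤ) : ℂ) - (t : ℂ)) * z))) =
      ∑ j ∈ Finset.range (m+1), (c j + (starRingEnd ℂ) (c (m - j))) * Y j := by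
    intro c
    simp only [add_mul, Finset.sum_add_distrib]
    congr 1
    · rw [hY]
    · rw [← Finset.sum_range_reflect (fun j => (starRingEnd ℂ) (c (m - j)) * Y j)]
      apply Finset.sum_congr rfl
      intro j hj
      rw [Finset.mem_range] at hj
      rw [hYm j (by omega)]
      have : m - (m + 1 - 1 - j) = j := by omega
      rw [this]
      rfl
  rw [l1 (fun j => γ n * s n j), l1 (fun j => γ (n+1) * s (n+1) j)]
  apply Finset.sum_congr rfl
  intro j hj
  rw [Finset.mem_range] at hj
  have : m - (m - j) = j := by omega
  simp only [hs, this, hγ, map_mul, map_add, Complex.conj_conj]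
  ring

lemma gQ_cont (d : ℕ) (s : ℕ → ℕ → ℂ) (γ : ℕ → ℂ) (n : ℕ) (z : ℂ) :
    Continuous (fun t => gQ d s γ n t z) := by
  unfold gQ; fun_prop

lemma gQ_diff (d : ℕ) (s : ℕ → ℕ → ℂ) (γ : ℕ → ℂ) (n : ℕ) (t : ℝ) :
    Differentiable ℂ (gQ d s γ n t) := by
  unfold gQ; fun_prop

lemma Q_half (d : ℕ) (hd : 0 < d) (p q : ℕ → ℂ) (s : ℕ → ℕ → ℂ) (γ : ℕ → ℂ)
    (hγ : ∀ n < d, γ n = p n * γ (n+1) + q n * (starRingEnd ℂ) (γ (n+1)))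
    (hs : ∀ n < d, ∀ j, s (n+1) j = p n * s n j +
      (starRingEnd ℂ) (q n) * (starRingEnd ℂ) (s n (d - n - j)))
    (h0 : ∀ n < d, s (n+1) (d - n) = 0) :
    ∃ F : ℝ → ℂ → ℂ, (∀ z, Continuous (fun t => F t z)) ∧
      (∀ n, 1 ≤ n → n ≤ d → ∀ t : ℝ, (rv d : ℝ) * ((n : ℝ) - 1) / 2 ≤ t →
        t ≤ (rv d : ℝ) * (n : ℝ) / 2 → ∀ z, F t z = gQ d s γ n t z) ∧
      (∀ z, F 0 z = gQ d s γ 0 0 z) ∧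
      (∀ z, Tendsto (fun t => F t z) (nhdsWithin ((Lv d : ℝ)) (Set.Iio ((Lv d : ℝ))))
        (nhds (F 0 0))) := by
  have hr : (0 : ℝ) < (rv d : ℝ) / 2 := by
    have : (0 : ℝ) < rv d := by exact_mod_cast rv_pos d
    positivity
  have hm := fun n hn => gQ_match d p q s γ n hn (hγ n hn) (hs n hn) (h0 n hn)
  have gl := fun z => glueQ (fun n t => gQ d s γ (n+1) t z) ((rv d : ℝ) / 2) hr
    (fun n => gQ_cont d s γ (n+1) z) (d - 1) (fun n hn => hm (n+1) (by omega) _ z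
      (Or.inr (by push_cast; rfl)))
  choose F hF1 hF2 hF3 using gl
  have hF : ∀ n, 1 ≤ n → n ≤ d → ∀ t : ℝ, (rv d : ℝ) * ((n : ℝ) - 1) / 2 ≤ t →
        t ≤ (rv d : ℝ) * (n : ℝ) / 2 → ∀ z, F z t = gQ d s γ n t z := by
    intro n hn1 hn2 t ht1 ht2 z
    obtain ⟨n, rfl⟩ : ∃ m, n = m + 1 := ⟨n - 1, by omega⟩
    push_cast at ht1 ht2
    exact hF2 z n (by omega) t (by linarith) (by linarith)
  have hF0 : ∀ z, F z 0 = gQ d s γ 0 0 z := by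
    intro z
    rw [hm 0 hd 0 z (Or.inr (by simp))]
    apply hF 1 le_rfl hd
    · simp
    · simp; linarith
  refine ⟨fun t z => F z t, hF1, hF, hF0, ?_⟩
  intro z
  have hc : Tendsto (fun t => F z t) (nhdsWithin ((Lv d : ℝ)) (Set.Iio ((Lv d : ℝ))))
      (nhds (F z (Lv d))) := ((hF1 z).tendsto _).mono_left nhdsWithin_le_nhds
  have hL : (Lv d : ℝ) = (rv d : ℝ) * d / 2 := by
    have := congrArg (fun x : ℤ => (x : ℝ)) (Lv_two d)
    push_cast at this
    linarith
  have hFL : F z (Lv d) = F 0 0 := by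
    rw [hF0, hF d hd le_rfl _ (by rw [hL]; linarith) (by rw [hL])]
    have ind : ∀ n ≤ d, gQ d s γ n (Lv d) 0 = gQ d s γ 0 0 0 := by
      intro n
      induction n with
      | zero => intro _; simp [gQ]
      | succ n ih => intro hn; rw [← hm n hn _ _ (Or.inl rfl), ih (by omega)]
    rw [← ind d le_rfl]
    simp [gQ]
  beta_reduce
  rw [← hFL]
  exact hc

lemma gQ_deriv (d : ℕ) (s : ℕ → ℕ → ℂ) (γ α β : ℕ → ℂ) (n : ℕ) (t : ℝ) (z : ℂ) (x y : ℝ)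
    (h : x * α n + y * β n = -Complex.I * γ n) :
    HasDerivAt (fun t => gQ d s γ n t z) (z * (x * gQ d s α n t z + y * gQ d s β n t z)) t := by
  have h' := congrArg (starRingEnd ℂ) h
  simp at h'
  have key : z * (x * gQ d s α n t z + y * gQ d s β n t z) =
    (1 / 2) * ∑ j ∈ Finset.range (d - n + 1),
          (γ n * s n j * (Complex.exp (Complex.I * (((Lv d - rv d * j : ℤ) : ℂ) - (t : ℂ)) * z) *
            (Complex.I * (-1) * z))
            + (starRingEnd ℂ) (γ n * s n j) *
              (Complex.exp (-(Complex.I * (((Lv d - rv d * j : ℤ) : ℂ) - (t : ℂ)) * z)) *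
              (-(Complex.I * (-1) * z)))) := by
    unfold gQ
    simp only [Finset.mul_sum, ← Finset.sum_add_distrib]
    apply Finset.sum_congr rfl
    intro j _
    simp only [map_mul]
    linear_combination (1/2) * z * s n j *
      Complex.exp (Complex.I * (((Lv d - rv d * j : ℤ) : ℂ) - (t : ℂ)) * z) * h +
      (1/2) * z * (starRingEnd ℂ) (s n j) *
      Complex.exp (-(Complex.I * (((Lv d - rv d * j : ℤ) : ℂ) - (t : ℂ)) * z)) * h'
  rw [key]
  unfold gQ
  apply HasDerivAt.const_mul
  apply HasDerivAt.fun_sum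
  intro j _
  have base : HasDerivAt (fun t : ℝ => Complex.I * (((Lv d - rv d * j : ℤ) : ℂ) - (t : ℂ)) * z)
      (Complex.I * (-1) * z) t :=
    (((Complex.ofRealCLM.hasDerivAt (x := t)).const_sub _).const_mul _).mul_const _
  exact (base.cexp.const_mul _).add (base.neg.cexp.const_mul _)

lemma Rprod_succ (zp zm : ℕ → ℕ → ℂ) (n : ℕ) :
    Rprod zp zm (n+1) = Rmat zp zm (n+1) * Rprod zp zm n := by
  simp [Rprod, List.range_succ_eq_map, Function.comp_def]

lemma Rmat_det (zp zm : ℕ → ℕ → ℂ) (n : ℕ) (h : pS zp zm n * (starRingEnd ℂ) (pS zp zm n) -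
    qS zp zm n * (starRingEnd ℂ) (qS zp zm n) ≠ 0) : (Rmat zp zm (n+1)).det ≠ 0 := by
  intro h0
  apply h
  simp [Rmat, Matrix.det_fin_two] at h0
  unfold pS qS
  apply Complex.ext
  · simp [Complex.conj_ofNat]; linear_combination h0
  · simp [Complex.conj_ofNat]; ring

def gaQ (zp zm : ℕ → ℕ → ℂ) (i : Fin 2) (n : ℕ) : ℂ :=
  ((Rprod zp zm n)⁻¹ i 0 : ℝ) + Complex.I * ((Rprod zp zm n)⁻¹ i 1 : ℝ)

lemma gaQ_rel (zp zm : ℕ → ℕ → ℂ) (n : ℕ) (h : (Rmat zp zm (n+1)).det ≠ 0) (i : Fin 2) :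
    gaQ zp zm i n = pS zp zm n * gaQ zp zm i (n+1) +
      qS zp zm n * (starRingEnd ℂ) (gaQ zp zm i (n+1)) := by
  have e : (Rprod zp zm n)⁻¹ = (Rprod zp zm (n+1))⁻¹ * Rmat zp zm (n+1) := by
    rw [Rprod_succ, Matrix.mul_inv_rev, Matrix.mul_assoc,
      Matrix.nonsing_inv_mul _ (isUnit_iff_ne_zero.mpr h), Matrix.mul_one]
  unfold gaQ
  rw [e]
  simp only [Matrix.mul_apply, Fin.sum_univ_two, Rmat, pS, qS]
  apply Complex.ext
  · simp; ring
  · simp; ring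

lemma Hmat_rel (zp zm : ℕ → ℕ → ℂ) (n : ℕ) (h : (Rprod zp zm n).det ≠ 0) :
    ((Hmat zp zm n 1 0 : ℝ) * gaQ zp zm 0 n + (Hmat zp zm n 1 1 : ℝ) * gaQ zp zm 1 n =
      -Complex.I * gaQ zp zm 0 n) ∧
    (((-Hmat zp zm n 0 0 : ℝ)) * gaQ zp zm 0 n + (-Hmat zp zm n 0 1 : ℝ) * gaQ zp zm 1 n =
      -Complex.I * gaQ zp zm 1 n) := by
  have e := Matrix.mul_nonsing_inv _ (isUnit_iff_ne_zero.mpr h)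
  unfold Hmat gaQ
  have hJ : (!![(0:ℝ), -1; 1, 0])⁻¹ = !![(0:ℝ), 1; -1, 0] := by
    apply Matrix.inv_eq_right_inv
    ext i j; fin_cases i <;> fin_cases j <;> simp
  rw [hJ]
  generalize (Rprod zp zm n)⁻¹ = K at e ⊢
  generalize Rprod zp zm n = P at e ⊢
  have e00 := congrFun (congrFun e 0) 0
  have e01 := congrFun (congrFun e 0) 1
  have e10 := congrFun (congrFun e 1) 0
  have e11 := congrFun (congrFun e 1) 1
  simp [Matrix.mul_apply, Fin.sum_univ_two] at e00 e01 e10 e11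
  have c00 := congrArg (fun x : ℝ => (x : ℂ)) e00
  have c01 := congrArg (fun x : ℝ => (x : ℂ)) e01
  have c10 := congrArg (fun x : ℝ => (x : ℂ)) e10
  have c11 := congrArg (fun x : ℝ => (x : ℂ)) e11
  push_cast at c00 c01 c10 c11
  have hI := Complex.I_mul_I
  simp only [Matrix.mul_apply, Fin.sum_univ_two]
  simp
  constructor
  · linear_combination (K 0 1 : ℂ) * c00 + (K 0 1 : ℂ) * Complex.I * c01 - (K 0 0 : ℂ) * c10
      - (K 0 0 : ℂ) * Complex.I * c11 + (K 0 1 : ℂ) * hI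
  · linear_combination (K 1 1 : ℂ) * c00 + (K 1 1 : ℂ) * Complex.I * c01 - (K 1 0 : ℂ) * c10
      - (K 1 0 : ℂ) * Complex.I * c11 + (K 1 1 : ℂ) * hI

lemma sharp_Ecal (d : ℕ) (C : ℤ → ℂ) (z : ℂ) : sharp (Ecal d C) z =
    ∑ j ∈ Finset.range (d + 1), (starRingEnd ℂ) (C (Lv d - rv d * j)) *
      Complex.exp (-(Complex.I * ((Lv d - rv d * j : ℤ) : ℂ) * z)) := by
  simp [sharp, Ecal, ← Complex.exp_conj]

/-- Theorem 1: the inverse problem for the quasi-canonical system attached to `E_𝒞`. -/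
theorem quasiCanonical_inverse_problem
    (d : ℕ) (hd : 0 < d) (C : ℤ → ℂ) (hC : C (Lv d) * C (-(Lv d)) ≠ 0)
    (hD : ∀ n, 1 ≤ n → n ≤ d → SCD d C n ≠ 0)
    (zp zm : ℕ → ℕ → ℂ)
    (hzp : ∀ n, 1 ≤ n → n ≤ d →
      (SCL (coeffC d C) d n 1).mulVec (symVec n (zp n)) = -(rhsVec d n C))
    (hzm : ∀ n, 1 ≤ n → n ≤ d →
      (SCL (coeffC d C) d n (-1)).mulVec (symVec n (zm n)) = rhsVec d n C) :
    ∃ A B : ℝ → ℂ → ℂ, ∃ a b : ℕ → ℕ → ℂ,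
      -- continuity in t and analyticity in z
      (∀ z : ℂ, ContinuousOn (fun t => A t z) (Set.Ico (0 : ℝ) ((Lv d : ℝ)))) ∧
      (∀ z : ℂ, ContinuousOn (fun t => B t z) (Set.Ico (0 : ℝ) ((Lv d : ℝ)))) ∧
      (∀ t ∈ Set.Ico (0 : ℝ) ((Lv d : ℝ)), Differentiable ℂ (A t) ∧ Differentiable ℂ (B t)) ∧
      -- (i) the explicit exponential-polynomial form on each subinterval
      (∀ n, 1 ≤ n → n ≤ d → ∀ t : ℝ,
        (rv d : ℝ) * ((n : ℝ) - 1) / 2 ≤ t → t < (rv d : ℝ) * (n : ℝ) / 2 → ∀ z : ℂ,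
        A t z = (1 / 2) * ∑ j ∈ Finset.range (d - n + 1),
          (a n j * Complex.exp (Complex.I * (((Lv d - rv d * j : ℤ) : ℂ) - (t : ℂ)) * z)
            + (starRingEnd ℂ) (a n j) *
              Complex.exp (-(Complex.I * (((Lv d - rv d * j : ℤ) : ℂ) - (t : ℂ)) * z))) ∧
        B t z = (1 / 2) * ∑ j ∈ Finset.range (d - n + 1),
          (b n j * Complex.exp (Complex.I * (((Lv d - rv d * j : ℤ) : ℂ) - (t : ℂ)) * z)
            + (starRingEnd ℂ) (b n j) *
              Complex.exp (-(Complex.I * (((Lv d - rv d * j : ℤ) : ℂ) - (t : ℂ)) * z)))) ∧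
      -- (ii) the quasi-canonical system with Hamiltonian H(t) = H_n(𝒞) on each open subinterval
      (∀ n, 1 ≤ n → n ≤ d → ∀ t : ℝ,
        t ∈ Set.Ioo ((rv d : ℝ) * ((n : ℝ) - 1) / 2) ((rv d : ℝ) * (n : ℝ) / 2) → ∀ z : ℂ,
        HasDerivAt (fun s => A s z)
          (z * ((Hmat zp zm n 1 0 : ℝ) * A t z + (Hmat zp zm n 1 1 : ℝ) * B t z)) t ∧
        HasDerivAt (fun s => B s z)
          (-(z * ((Hmat zp zm n 0 0 : ℝ) * A t z + (Hmat zp zm n 0 1 : ℝ) * B t z))) t) ∧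
      -- (iii) the boundary condition at t = 0
      (∀ z : ℂ, A 0 z = (Ecal d C z + sharp (Ecal d C) z) / 2 ∧
        B 0 z = Complex.I / 2 * (Ecal d C z - sharp (Ecal d C) z)) ∧
      -- (iv) the boundary condition at t = L: the limit is independent of z
      (∀ z : ℂ, Tendsto (fun t => (A t z, B t z))
        (nhdsWithin ((Lv d : ℝ)) (Set.Iio ((Lv d : ℝ)))) (nhds (A 0 0, B 0 0))) := by
  set s := sS (coeffC d C) d (pS zp zm) (qS zp zm) with hs_def
  have hmain := Q_main d C hC hD zp zm hzp hzm
  have hR : ∀ n < d, (Rmat zp zm (n+1)).det ≠ 0 := fun n hn => Rmat_det zp zm n (hmain n hn).2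
  have hP : ∀ n ≤ d, (Rprod zp zm n).det ≠ 0 := by
    intro n
    induction n with
    | zero => intro _; simp [Rprod]
    | succ n ih =>
      intro hn
      rw [Rprod_succ, Matrix.det_mul]
      exact mul_ne_zero (hR n hn) (ih (by omega))
  have hrec : ∀ n < d, ∀ j, s (n+1) j = pS zp zm n * s n j +
      (starRingEnd ℂ) (qS zp zm n) * (starRingEnd ℂ) (s n (d - n - j)) := fun n _ j => rfl
  have hz : ∀ n < d, s (n+1) (d - n) = 0 := fun n hn => (hmain n hn).1
  obtain ⟨A, A1, A2, A3, A4⟩ := Q_half d hd (pS zp zm) (qS zp zm) s (gaQ zp zm 0)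
    (fun n hn => gaQ_rel zp zm n (hR n hn) 0) hrec hz
  obtain ⟨B, B1, B2, B3, B4⟩ := Q_half d hd (pS zp zm) (qS zp zm) s (gaQ zp zm 1)
    (fun n hn => gaQ_rel zp zm n (hR n hn) 1) hrec hz
  have hr : (0 : ℝ) < (rv d : ℝ) := by exact_mod_cast rv_pos d
  have hL : (Lv d : ℝ) = (rv d : ℝ) * d / 2 := by
    have := congrArg (fun x : ℤ => (x : ℝ)) (Lv_two d)
    push_cast at this
    linarith
  refine ⟨A, B, fun n j => gaQ zp zm 0 n * s n j, fun n j => gaQ zp zm 1 n * s n j,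
    fun z => (A1 z).continuousOn, fun z => (B1 z).continuousOn, ?_, ?_, ?_, ?_, ?_⟩
  · rintro t ⟨ht0, ht1⟩
    have hx : 0 ≤ 2 * t / rv d := by positivity
    have f1 := Nat.floor_le hx
    have f2 := Nat.lt_floor_add_one (2 * t / rv d)
    rw [le_div_iff₀ hr] at f1
    rw [div_lt_iff₀ hr] at f2
    have hlt : ⌊2 * t / rv d⌋₊ < d := by
      have : (⌊2 * t / rv d⌋₊ : ℝ) < d := by
        rw [hL] at ht1
        by_contra hcon
        push Not at hcon
        nlinarith
      exact_mod_cast this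
    have g1 : (rv d : ℝ) * (((⌊2 * t / rv d⌋₊ + 1 : ℕ) : ℝ) - 1) / 2 ≤ t := by
      push_cast; linarith
    have g2 : t ≤ (rv d : ℝ) * ((⌊2 * t / rv d⌋₊ + 1 : ℕ) : ℝ) / 2 := by
      push_cast; linarith
    have eA : A t = gQ d s (gaQ zp zm 0) (⌊2 * t / rv d⌋₊ + 1) t :=
      funext (A2 _ (by omega) (by omega) t g1 g2)
    have eB : B t = gQ d s (gaQ zp zm 1) (⌊2 * t / rv d⌋₊ + 1) t :=
      funext (B2 _ (by omega) (by omega) t g1 g2)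
    rw [eA, eB]
    exact ⟨gQ_diff _ _ _ _ _, gQ_diff _ _ _ _ _⟩
  · intro n hn1 hn2 t ht1 ht2 z
    exact ⟨A2 n hn1 hn2 t ht1 ht2.le z, B2 n hn1 hn2 t ht1 ht2.le z⟩
  · intro n hn1 hn2 t ht z
    have hnh : ∀ᶠ u in nhds t, u ∈ Set.Ioo ((rv d : ℝ) * ((n : ℝ) - 1) / 2)
      ((rv d : ℝ) * (n : ℝ) / 2) := isOpen_Ioo.mem_nhds ht
    obtain ⟨hH1, hH2⟩ := Hmat_rel zp zm n (hP n hn2)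
    rw [A2 n hn1 hn2 t ht.1.le ht.2.le z, B2 n hn1 hn2 t ht.1.le ht.2.le z]
    constructor
    · refine (gQ_deriv d s (gaQ zp zm 0) (gaQ zp zm 0) (gaQ zp zm 1) n t z _ _ hH1).congr_of_eventuallyEq ?_
      filter_upwards [hnh] with u hu
      exact A2 n hn1 hn2 u hu.1.le hu.2.le z
    · have := (gQ_deriv d s (gaQ zp zm 1) (gaQ zp zm 0) (gaQ zp zm 1) n t z _ _ hH2)
      refine HasDerivAt.congr_of_eventuallyEq (f := fun t => gQ d s (gaQ zp zm 1) n t z) ?_ ?_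
      · refine this.congr_deriv ?_
        push_cast
        ring
      · filter_upwards [hnh] with u hu
        exact B2 n hn1 hn2 u hu.1.le hu.2.le z
  · intro z
    have hs0 : ∀ j : ℕ, s 0 j = C (Lv d - rv d * j) := fun j => rfl
    have ga0 : gaQ zp zm 0 0 = 1 := by simp [gaQ, Rprod]
    have ga1 : gaQ zp zm 1 0 = Complex.I := by simp [gaQ, Rprod]
    rw [A3, B3, sharp_Ecal]
    unfold gQ Ecal
    rw [ga0, ga1, ← Finset.sum_add_distrib, ← Finset.sum_sub_distrib, Finset.mul_sum,
      Finset.mul_sum, Finset.mul_sum, Finset.sum_div]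
    constructor
    · apply Finset.sum_congr rfl
      intro j _
      rw [hs0]
      simp only [one_mul, Complex.ofReal_zero, sub_zero]
      ring
    · apply Finset.sum_congr rfl
      intro j _
      rw [hs0]
      simp only [map_mul, Complex.conj_I, Complex.ofReal_zero, sub_zero]
      ring
  · intro z
    exact (A4 z).prodMk_nhds (B4 z)

end
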